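/- arXiv:2311.02366 — 2 statements merged into one kernel-verified Lean document; each statement's English description precedes it below -/
import Mathlib

section
/- Let α ≥ 1 be a real number. Then the binary Rényi entropy h_α is convex relative to the Bhattacharyya function: there exists a function φ, convex and nondecreasing on [0, 1/2], such that h_α(p) = φ(√(p(1−p))) for all p ∈ (0,1). -/
/-!
Write `p = eᵗ / (2 cosh t)`, so that `1 - p = e⁻ᵗ / (2 cosh t)` and the Bhattacharyya function is
`b = √(p (1 - p)) = 1 / (2 cosh t)`. By the symmetry `p ↔ 1 - p` it suffices to take `t ≥ 0`, and
then the entropy is a function `φ` of `b`, with `φ (1 / (2 cosh t)) = H t` where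

* `H t = (log (2 cosh αt) - α log (2 cosh t)) / (1 - α)` if `α > 1`,
* `H t = log (2 cosh t) - t tanh t` if `α = 1`.

The chain rule gives `φ' (b) = G t`, where

* `G t = 2α / (α - 1) * sinh ((α - 1) t) cosh t / (cosh αt sinh t)` if `α > 1`,
* `G t = 2t / sinh t` if `α = 1`.

Here `G ≥ 0`, so `φ` is nondecreasing. As `b` decreases in `t`, convexity of `φ` means that `G` is
antitone on `t > 0`. For `α = 1` this says that `sinh t / t` is monotone. For `α > 1`, expanding
`cosh αt = cosh (t + βt)` with `β = α - 1` shows that `G t` is a positive constant divided by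
`(sinh t / t) * (t coth βt) + (cosh t - 1 / cosh t)`, and every factor and summand there is
positive and monotone. The lemma `convexOn_monotoneOn_of_param` carries the change of variable,
`sinh_div_self_monotoneOn` and `mul_coth_monotoneOn` the monotonicity.
-/


/-- The binary Rényi entropy of order `α` (natural logarithm), with the
Shannon entropy at `α = 1`. -/
noncomputable def binaryRenyiEntropy (α p : ℝ) : ℝ :=
  if α = 1 then -(p * Real.log p) - (1 - p) * Real.log (1 - p)
  else (1 / (1 - α)) * Real.log (p ^ α + (1 - p) ^ α)

open Real Set

/-! ### Monotonicity of hyperbolic quotients -/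

lemma sinh_div_self_monotoneOn : MonotoneOn (fun t : ℝ => sinh t / t) (Ioi 0) := by
  have hd : ∀ t ∈ Ioi (0 : ℝ),
      HasDerivAt (fun t : ℝ => sinh t / t) ((cosh t * t - sinh t * 1) / t ^ 2) t := fun t ht =>
    (hasDerivAt_sinh t).div (hasDerivAt_id t) (ne_of_gt ht)
  -- `t cosh t - sinh t` vanishes at `0` and has derivative `t sinh t`.
  have key : MonotoneOn (fun t : ℝ => cosh t * t - sinh t) (Ici 0) := by
    have hk : ∀ t : ℝ, HasDerivAt (fun t : ℝ => cosh t * t - sinh t)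
        (sinh t * t + cosh t * 1 - cosh t) t := fun t =>
      ((hasDerivAt_cosh t).mul (hasDerivAt_id t)).sub (hasDerivAt_sinh t)
    refine monotoneOn_of_deriv_nonneg (convex_Ici 0)
      (fun t _ => (hk t).continuousAt.continuousWithinAt)
      (fun t _ => (hk t).differentiableAt.differentiableWithinAt) fun t ht => ?_
    rw [interior_Ici] at ht
    rw [(hk t).deriv]
    have := mul_pos (sinh_pos_iff.2 ht) ht
    linarith
  refine monotoneOn_of_deriv_nonneg (convex_Ioi 0)
    (fun t ht => (hd t ht).continuousAt.continuousWithinAt)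
    (fun t ht => (hd t (interior_subset ht)).differentiableAt.differentiableWithinAt)
    fun t ht => ?_
  rw [interior_Ioi] at ht
  rw [(hd t ht).deriv]
  have h := key (mem_Ici.2 le_rfl : (0 : ℝ) ∈ Ici 0) (mem_Ici.2 (le_of_lt ht)) (le_of_lt ht)
  simp only [mul_zero, sinh_zero, sub_zero] at h
  apply div_nonneg _ (sq_nonneg t)
  linarith

/-- `u coth u` is monotone: the numerator of its derivative is `cosh u sinh u - u ≥ 0`. -/
lemma self_coth_monotoneOn : MonotoneOn (fun u : ℝ => u * cosh u / sinh u) (Ioi 0) := by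
  have hd : ∀ u ∈ Ioi (0 : ℝ), HasDerivAt (fun u : ℝ => u * cosh u / sinh u)
      (((1 * cosh u + u * sinh u) * sinh u - u * cosh u * cosh u) / sinh u ^ 2) u := fun u hu =>
    ((hasDerivAt_id u).mul (hasDerivAt_cosh u)).div (hasDerivAt_sinh u)
      (ne_of_gt (sinh_pos_iff.2 hu))
  refine monotoneOn_of_deriv_nonneg (convex_Ioi 0)
    (fun t ht => (hd t ht).continuousAt.continuousWithinAt)
    (fun t ht => (hd t (interior_subset ht)).differentiableAt.differentiableWithinAt)
    fun u hu => ?_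
  rw [interior_Ioi] at hu
  rw [(hd u hu).deriv]
  apply div_nonneg _ (sq_nonneg _)
  have h1 : u ≤ sinh u := self_le_sinh_iff.2 (le_of_lt hu)
  have h2 := one_le_cosh u
  have h3 := cosh_sq u
  have hu' : 0 < u := hu
  nlinarith

lemma mul_coth_monotoneOn {β : ℝ} (hβ : 0 < β) :
    MonotoneOn (fun t : ℝ => t * cosh (β * t) / sinh (β * t)) (Ioi 0) := by
  intro s hs t ht hst
  have h := self_coth_monotoneOn (mem_Ioi.2 (mul_pos hβ hs)) (mem_Ioi.2 (mul_pos hβ ht))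
    (mul_le_mul_of_nonneg_left hst hβ.le)
  simp only [mul_assoc, mul_div_assoc] at h ⊢
  exact le_of_mul_le_mul_left h hβ

/-! ### The change of variable `b = 1 / (2 cosh t)` -/

/-- A function given parametrically by `f (1 / (2 cosh t)) = H t` has derivative
`H' t / (d/dt) (1 / (2 cosh t))`; this quotient is called `G t`. If `G` is nonnegative and antitone
in `t`, then `f` is monotone and convex. -/
lemma convexOn_monotoneOn_of_param {f H G : ℝ → ℝ}
    (hf : ContinuousOn f (Icc 0 (1 / 2)))
    (hfH : ∀ t, 0 < t → f (1 / (2 * cosh t)) = H t)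
    (hH : ∀ t, 0 < t → HasDerivAt H (-(G t * sinh t / (2 * cosh t ^ 2))) t)
    (hG : AntitoneOn G (Ioi 0)) (hG0 : ∀ t, 0 < t → 0 ≤ G t) :
    ConvexOn ℝ (Icc 0 (1 / 2)) f ∧ MonotoneOn f (Icc 0 (1 / 2)) := by
  have hx : ∀ b ∈ Ioo (0 : ℝ) (1 / 2), 1 < (2 * b)⁻¹ := fun b hb =>
    (one_lt_inv₀ (by linarith [hb.1])).2 (by linarith [hb.2])
  have hT : ∀ b ∈ Ioo (0 : ℝ) (1 / 2), 0 < arcosh (2 * b)⁻¹ := fun b hb => arcosh_pos (hx b hb)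
  have hd : ∀ b ∈ Ioo (0 : ℝ) (1 / 2), HasDerivAt f (G (arcosh (2 * b)⁻¹)) b := by
    intro b hb
    have hb0 : b ≠ 0 := ne_of_gt hb.1
    have hinv : HasDerivAt (fun b : ℝ => (2 * b)⁻¹) (-(2 * 1) / (2 * b) ^ 2) b :=
      ((hasDerivAt_id b).const_mul 2).inv (by simpa using hb0)
    have hcomp := (hH _ (hT b hb)).comp b ((hasDerivAt_arcosh (hx b hb)).comp b hinv)
    have heq : f =ᶠ[nhds b] H ∘ (arcosh ∘ fun b : ℝ => (2 * b)⁻¹) := by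
      filter_upwards [Ioo_mem_nhds hb.1 hb.2] with c hc
      have := hfH _ (hT c hc)
      rw [cosh_arcosh (hx c hc).le] at this
      rw [Function.comp, Function.comp, ← this]
      congr 1
      have : c ≠ 0 := ne_of_gt hc.1
      field_simp
    refine (hcomp.congr_of_eventuallyEq heq).congr_deriv ?_
    rw [← sinh_arcosh (hx b hb).le]
    have hs : sinh (arcosh (2 * b)⁻¹) ≠ 0 := ne_of_gt (sinh_pos_iff.2 (hT b hb))
    rw [cosh_arcosh (hx b hb).le]
    generalize sinh (arcosh (2 * b)⁻¹) = S at hs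
    generalize G (arcosh (2 * b)⁻¹) = g
    field_simp
  have hdiff : DifferentiableOn ℝ f (interior (Icc 0 (1 / 2))) := by
    rw [interior_Icc]
    exact fun b hb => (hd b hb).differentiableAt.differentiableWithinAt
  constructor
  · refine MonotoneOn.convexOn_of_deriv (convex_Icc _ _) hf hdiff ?_
    rw [interior_Icc]
    intro a ha b hb hab
    rw [(hd a ha).deriv, (hd b hb).deriv]
    refine hG (hT b hb) (hT a ha) ?_
    have ha0 := ha.1
    have hb0 := hb.1
    rw [arcosh_le_arcosh (by positivity) (by positivity)]
    gcongr
  · refine monotoneOn_of_deriv_nonneg (convex_Icc _ _) hf hdiff ?_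
    rw [interior_Icc]
    intro b hb
    rw [(hd b hb).deriv]
    exact hG0 _ (hT b hb)

/-! ### The entropy as a function of the Bhattacharyya value -/

/-- The larger of the two solutions `p` of `√(p (1 - p)) = b`, for `b ∈ [0, 1/2]`. -/
noncomputable def probOfBhatt (b : ℝ) : ℝ := (1 + √(1 - 4 * b ^ 2)) / 2

lemma continuous_probOfBhatt : Continuous probOfBhatt := by
  unfold probOfBhatt
  fun_prop

lemma probOfBhatt_cosh {t : ℝ} (ht : 0 < t) :
    probOfBhatt (1 / (2 * cosh t)) = exp t / (2 * cosh t) ∧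
      1 - probOfBhatt (1 / (2 * cosh t)) = exp (-t) / (2 * cosh t) := by
  have hc := cosh_pos t
  have hs := sinh_pos_iff.2 ht
  have h : √(1 - 4 * (1 / (2 * cosh t)) ^ 2) = sinh t / cosh t := by
    rw [← sqrt_sq (div_pos hs hc).le]
    congr 1
    field_simp
    linarith [cosh_sq t]
  have he := cosh_add_sinh t
  have he' := cosh_sub_sinh t
  unfold probOfBhatt
  rw [h, ← he, ← he']
  constructor <;> field_simp
  ring

lemma binaryRenyiEntropy_symm (α p : ℝ) :
    binaryRenyiEntropy α (1 - p) = binaryRenyiEntropy α p := by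
  unfold binaryRenyiEntropy
  rw [sub_sub_cancel, add_comm ((1 - p) ^ α)]
  split_ifs
  · ring
  · rfl

lemma binaryRenyiEntropy_probOfBhatt (α : ℝ) {p : ℝ} (hp : p ∈ Ioo (0 : ℝ) 1) :
    binaryRenyiEntropy α p = binaryRenyiEntropy α (probOfBhatt √(p * (1 - p))) := by
  have h : √(1 - 4 * √(p * (1 - p)) ^ 2) = |2 * p - 1| := by
    rw [sq_sqrt (mul_nonneg hp.1.le (by linarith [hp.2])), ← sqrt_sq_eq_abs]
    congr 1
    ring
  unfold probOfBhatt
  rw [h]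
  rcases abs_cases (2 * p - 1) with ⟨h, -⟩ | ⟨h, -⟩ <;> rw [h]
  · congr 1
    ring
  · rw [← binaryRenyiEntropy_symm]
    congr 1
    ring

lemma continuousOn_binaryRenyiEntropy {α : ℝ} (hα : 1 ≤ α) :
    ContinuousOn (binaryRenyiEntropy α) (Icc 0 1) := by
  unfold binaryRenyiEntropy
  split_ifs with h
  · have h1 : Continuous fun p : ℝ => p * log p := continuous_mul_log
    have h2 : Continuous fun p : ℝ => (1 - p) * log (1 - p) :=
      continuous_mul_log.comp (continuous_const.sub continuous_id)
    exact (h1.neg.sub h2).continuousOn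
  · have h0 : 0 ≤ α := by linarith
    have h1 : Continuous fun p : ℝ => p ^ α := continuous_rpow_const h0
    have h2 : Continuous fun p : ℝ => (1 - p) ^ α :=
      h1.comp (continuous_const.sub continuous_id)
    refine continuousOn_const.mul ((h1.add h2).continuousOn.log fun p hp => ?_)
    rcases hp.1.eq_or_lt with h | h
    · have h3 : (0 : ℝ) ^ α = 0 := zero_rpow (by linarith)
      simp [← h, h3]
    · exact ne_of_gt (add_pos_of_pos_of_nonneg (rpow_pos_of_pos h _)
        (rpow_nonneg (by linarith [hp.2]) _))

lemma continuousOn_entropy_probOfBhatt {α : ℝ} (hα : 1 ≤ α) :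
    ContinuousOn (fun b => binaryRenyiEntropy α (probOfBhatt b)) (Icc 0 (1 / 2)) := by
  refine (continuousOn_binaryRenyiEntropy hα).comp continuous_probOfBhatt.continuousOn ?_
  intro b _
  have h0 := sqrt_nonneg (1 - 4 * b ^ 2)
  have h1 : √(1 - 4 * b ^ 2) ≤ 1 := sqrt_le_one.2 (by nlinarith [sq_nonneg b])
  unfold probOfBhatt
  constructor <;> linarith

/-! ### Shannon entropy -/

lemma shannon_param {t : ℝ} (ht : 0 < t) :
    binaryRenyiEntropy 1 (probOfBhatt (1 / (2 * cosh t))) =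
      log (2 * cosh t) - t * sinh t / cosh t := by
  obtain ⟨h1, h2⟩ := probOfBhatt_cosh ht
  have hc := cosh_pos t
  rw [binaryRenyiEntropy, if_pos rfl, h2, h1, log_div (exp_ne_zero _) (by positivity),
    log_div (exp_ne_zero _) (by positivity), log_exp, log_exp,
    ← cosh_add_sinh t, ← cosh_sub_sinh t]
  field_simp
  ring

lemma shannon_hasDerivAt {t : ℝ} (ht : 0 < t) :
    HasDerivAt (fun t => log (2 * cosh t) - t * sinh t / cosh t)
      (-(2 * (sinh t / t)⁻¹ * sinh t / (2 * cosh t ^ 2))) t := by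
  have hc := cosh_pos t
  have hs := sinh_pos_iff.2 ht
  have hd : HasDerivAt (fun t => log (2 * cosh t) - t * sinh t / cosh t)
      ((2 * sinh t) / (2 * cosh t) -
        ((1 * sinh t + t * cosh t) * cosh t - t * sinh t * sinh t) / cosh t ^ 2) t :=
    (((hasDerivAt_cosh t).const_mul 2).log (by positivity)).sub
      (((hasDerivAt_id t).mul (hasDerivAt_sinh t)).div (hasDerivAt_cosh t) hc.ne')
  refine hd.congr_deriv ?_
  have h := cosh_sq t
  field_simp
  linear_combination -t * h

/-! ### Rényi entropy of order `α > 1` -/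

lemma renyi_param {α : ℝ} (hα : 1 < α) {t : ℝ} (ht : 0 < t) :
    binaryRenyiEntropy α (probOfBhatt (1 / (2 * cosh t))) =
      (1 / (1 - α)) * (log (2 * cosh (α * t)) - α * log (2 * cosh t)) := by
  obtain ⟨h1, h2⟩ := probOfBhatt_cosh ht
  have hc := cosh_pos t
  have hc' := cosh_pos (α * t)
  rw [binaryRenyiEntropy, if_neg hα.ne', h2, h1, div_rpow (exp_pos _).le (by positivity),
    div_rpow (exp_pos _).le (by positivity), ← exp_mul, ← exp_mul, ← add_div,
    log_div (by positivity) (by positivity), log_rpow (by positivity), cosh_eq (α * t)]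
  congr 3
  rw [mul_comm t α, neg_mul, mul_comm t α]
  ring

/-- The reciprocal, up to the factor `2α / (α - 1)`, of the derivative of the entropy of order
`α = β + 1` with respect to the Bhattacharyya value `1 / (2 cosh t)`. -/
noncomputable def renyiSlopeInv (β t : ℝ) : ℝ :=
  sinh t / t * (t * cosh (β * t) / sinh (β * t)) + (cosh t - (cosh t)⁻¹)

lemma renyiSlopeInv_pos {β t : ℝ} (hβ : 0 < β) (ht : 0 < t) : 0 < renyiSlopeInv β t := by
  have h1 := sinh_pos_iff.2 ht
  have h2 := sinh_pos_iff.2 (mul_pos hβ ht)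
  have h3 := cosh_pos (β * t)
  have h4 : (cosh t)⁻¹ ≤ cosh t :=
    (inv_le_one_of_one_le₀ (one_le_cosh t)).trans (one_le_cosh t)
  unfold renyiSlopeInv
  exact add_pos_of_pos_of_nonneg (by positivity) (by linarith)

lemma renyiSlopeInv_monotoneOn {β : ℝ} (hβ : 0 < β) :
    MonotoneOn (renyiSlopeInv β) (Ioi 0) := by
  intro s hs t ht hst
  have hs' : 0 < s := hs
  have ht' : 0 < t := ht
  have h1 := sinh_pos_iff.2 ht'
  have h2 := sinh_pos_iff.2 (mul_pos hβ hs')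
  have h3 := cosh_pos (β * s)
  have hc : cosh s ≤ cosh t := by
    rw [cosh_le_cosh, abs_of_pos hs', abs_of_pos ht']
    exact hst
  have hci : (cosh t)⁻¹ ≤ (cosh s)⁻¹ := inv_anti₀ (cosh_pos s) hc
  exact add_le_add (mul_le_mul (sinh_div_self_monotoneOn hs ht hst)
    (mul_coth_monotoneOn hβ hs ht hst) (by positivity) (by positivity)) (by linarith)

lemma renyi_hasDerivAt {α : ℝ} (hα : 1 < α) {t : ℝ} (ht : 0 < t) :
    HasDerivAt (fun t => (1 / (1 - α)) * (log (2 * cosh (α * t)) - α * log (2 * cosh t)))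
      (-(2 * α / (α - 1) * (renyiSlopeInv (α - 1) t)⁻¹ * sinh t / (2 * cosh t ^ 2))) t := by
  have hβ : 0 < α - 1 := by linarith
  have hc := cosh_pos t
  have hs := sinh_pos_iff.2 ht
  have hca := cosh_pos (α * t)
  have hsb := sinh_pos_iff.2 (mul_pos hβ ht)
  have hd1 : HasDerivAt (fun t => cosh (α * t)) (sinh (α * t) * (α * 1)) t :=
    ((hasDerivAt_id t).const_mul α).cosh
  have hd : HasDerivAt
      (fun t => (1 / (1 - α)) * (log (2 * cosh (α * t)) - α * log (2 * cosh t)))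
      ((1 / (1 - α)) * ((2 * (sinh (α * t) * (α * 1))) / (2 * cosh (α * t)) -
        α * ((2 * sinh t) / (2 * cosh t)))) t :=
    (((hd1.const_mul 2).log (by positivity)).sub
      ((((hasDerivAt_cosh t).const_mul 2).log (by positivity)).const_mul α)).const_mul _
  refine hd.congr_deriv ?_
  have e1 : cosh (α * t) = cosh ((α - 1) * t) * cosh t + sinh ((α - 1) * t) * sinh t := by
    rw [← cosh_add]
    congr 1
    ring
  have e2 : sinh (α * t) * cosh t - cosh (α * t) * sinh t = sinh ((α - 1) * t) := by
    rw [← sinh_sub]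
    congr 1
    ring
  have e3 : renyiSlopeInv (α - 1) t =
      cosh (α * t) * sinh t / (sinh ((α - 1) * t) * cosh t) := by
    have h := cosh_sq t
    rw [e1, renyiSlopeInv]
    field_simp
    rw [h]
    ring
  have hne : 1 - α ≠ 0 := by linarith
  rw [e3, ← e2]
  rw [← e2] at hsb
  have hsb' := hsb.ne'
  have hneg : 1 - α = -(α - 1) := by ring
  rw [hneg]
  field_simp

theorem stmt_11 (α : ℝ) (hα : 1 ≤ α) :
    ∃ φ : ℝ → ℝ,
      ConvexOn ℝ (Set.Icc (0 : ℝ) (1 / 2)) φ ∧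
      MonotoneOn φ (Set.Icc (0 : ℝ) (1 / 2)) ∧
      ∀ p ∈ Set.Ioo (0 : ℝ) 1,
        binaryRenyiEntropy α p = φ (Real.sqrt (p * (1 - p))) := by
  refine ⟨fun b => binaryRenyiEntropy α (probOfBhatt b), ?_⟩
  rw [← and_assoc]
  refine ⟨?_, fun p hp => binaryRenyiEntropy_probOfBhatt α hp⟩
  have hcont := continuousOn_entropy_probOfBhatt hα
  rcases hα.eq_or_lt with rfl | hα
  · refine convexOn_monotoneOn_of_param hcont (G := fun t => 2 * (sinh t / t)⁻¹)
      (fun t ht => shannon_param ht) (fun t ht => shannon_hasDerivAt ht) ?_ ?_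
    · intro s hs t ht hst
      have hs' : 0 < s := hs
      have h := sinh_pos_iff.2 hs'
      exact mul_le_mul_of_nonneg_left
        (inv_anti₀ (by positivity) (sinh_div_self_monotoneOn hs ht hst)) zero_le_two
    · intro t ht
      have h := sinh_pos_iff.2 ht
      positivity
  · have hβ : 0 < α - 1 := by linarith
    have hk : 0 ≤ 2 * α / (α - 1) := div_nonneg (by linarith) hβ.le
    refine convexOn_monotoneOn_of_param hcont
      (G := fun t => 2 * α / (α - 1) * (renyiSlopeInv (α - 1) t)⁻¹)
      (fun t ht => renyi_param hα ht) (fun t ht => renyi_hasDerivAt hα ht) ?_ ?_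
    · intro s hs t ht hst
      exact mul_le_mul_of_nonneg_left
        (inv_anti₀ (renyiSlopeInv_pos hβ hs) (renyiSlopeInv_monotoneOn hβ hs ht hst)) hk
    · intro t ht
      exact mul_nonneg hk (inv_nonneg.2 (renyiSlopeInv_pos hβ ht).le)
end

section
/- Let 0 < α ≤ 1/2 be a real number. Then the binary Rényi entropy h_α is concave relative to the Bhattacharyya function: there exists a function φ, concave and nondecreasing on [0, 1/2], such that h_α(p) = φ(√(p(1−p))) for all p ∈ (0,1). In particular, for α = 1/2 one may take φ(x) = log(1+2x), since h_{1/2}(p) = 2·log(√p + √(1−p)) = log(1 + 2√(p(1−p))). -/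
open Real Set

/-- The numerator of the derivative of `sinh (a t) / sinh (b t)` is nonnegative: it vanishes at `0`
and its own derivative is `(a² - b²) sinh (a t) sinh (b t)`. -/
lemma sinh_ratio_aux {a b t : ℝ} (hb : 0 < b) (hab : b ≤ a) (ht : 0 ≤ t) :
    0 ≤ a * cosh (a * t) * sinh (b * t) - b * sinh (a * t) * cosh (b * t) := by
  set N : ℝ → ℝ := fun t => a * cosh (a * t) * sinh (b * t) - b * sinh (a * t) * cosh (b * t)
    with hN
  have hd : ∀ u, HasDerivAt N ((a ^ 2 - b ^ 2) * (sinh (a * u) * sinh (b * u))) u := by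
    intro u
    have h1 : HasDerivAt (fun t : ℝ => a * t) a u := by
      simpa using (hasDerivAt_id u).const_mul a
    have h2 : HasDerivAt (fun t : ℝ => b * t) b u := by
      simpa using (hasDerivAt_id u).const_mul b
    have := ((h1.cosh.const_mul a).mul h2.sinh).sub ((h1.sinh.const_mul b).mul h2.cosh)
    exact this.congr_deriv (by ring)
  have hmono : MonotoneOn N (Ici 0) := by
    refine monotoneOn_of_deriv_nonneg (convex_Ici 0)
      (fun u _ => (hd u).continuousAt.continuousWithinAt)
      (fun u _ => (hd u).differentiableAt.differentiableWithinAt) ?_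
    intro u hu
    rw [interior_Ici] at hu
    have hu0 : 0 < u := hu
    rw [(hd u).deriv]
    refine mul_nonneg (by nlinarith) (mul_nonneg ?_ ?_)
    · exact sinh_nonneg_iff.2 (mul_nonneg (by linarith) hu0.le)
    · exact sinh_nonneg_iff.2 (mul_nonneg hb.le hu0.le)
  have h0 := hmono (mem_Ici.2 le_rfl) (mem_Ici.2 ht) ht
  simpa [hN] using h0

lemma sinh_ratio_mono {a b : ℝ} (hb : 0 < b) (hab : b ≤ a) :
    MonotoneOn (fun t : ℝ => sinh (a * t) / sinh (b * t)) (Ioi 0) := by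
  have hpos : ∀ u : ℝ, u ∈ Ioi (0 : ℝ) → 0 < sinh (b * u) :=
    fun u hu => sinh_pos_iff.2 (mul_pos hb hu)
  have hd : ∀ u ∈ Ioi (0 : ℝ), HasDerivAt (fun t : ℝ => sinh (a * t) / sinh (b * t))
      ((a * cosh (a * u) * sinh (b * u) - b * sinh (a * u) * cosh (b * u))
        / sinh (b * u) ^ 2) u := by
    intro u hu
    have h1 : HasDerivAt (fun t : ℝ => a * t) a u := by
      simpa using (hasDerivAt_id u).const_mul a
    have h2 : HasDerivAt (fun t : ℝ => b * t) b u := by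
      simpa using (hasDerivAt_id u).const_mul b
    exact (h1.sinh.div h2.sinh (hpos u hu).ne').congr_deriv (by ring)
  refine monotoneOn_of_deriv_nonneg (convex_Ioi 0)
    (fun u hu => (hd u hu).continuousAt.continuousWithinAt)
    (fun u hu => (hd u (interior_subset hu)).differentiableAt.differentiableWithinAt) ?_
  intro u hu
  have hu' := interior_subset hu
  rw [(hd u hu').deriv]
  exact div_nonneg (sinh_ratio_aux hb hab (le_of_lt hu')) (sq_nonneg _)

/-- `cosh (a t) / cosh (b t)` is nondecreasing in `t ≥ 0` for `0 ≤ b ≤ a`, in cross-multiplied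
form. It follows from the product-to-sum formula. -/
lemma cosh_cross_le {a b s t : ℝ} (hb : 0 ≤ b) (hab : b ≤ a) (hs : 0 ≤ s) (hst : s ≤ t) :
    cosh (a * s) * cosh (b * t) ≤ cosh (a * t) * cosh (b * s) := by
  have h1 : cosh (a * s + b * t) ≤ cosh (a * t + b * s) := by
    rw [cosh_le_cosh, abs_of_nonneg (by nlinarith [mul_nonneg (hb.trans hab) hs]),
      abs_of_nonneg (by nlinarith [mul_nonneg hb hs, mul_nonneg (hb.trans hab) hs])]
    nlinarith
  have h2 : cosh (a * s - b * t) ≤ cosh (a * t - b * s) := by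
    rw [cosh_le_cosh]
    refine (abs_le.2 ⟨?_, ?_⟩).trans (le_abs_self _) <;> nlinarith
  rw [cosh_add, cosh_add] at h1
  rw [cosh_sub, cosh_sub] at h2
  linarith

/-- The derivative of the entropy with respect to `x = 1 / (2 cosh t)`, divided by the constant
`2 α / (1 - α)` and written in terms of `t`. -/
noncomputable def slopeFn (α t : ℝ) : ℝ :=
  cosh t * sinh ((1 - α) * t) / (sinh t * cosh (α * t))

lemma slopeFn_nonneg {α t : ℝ} (hα : α ≤ 1 / 2) (ht : 0 < t) : 0 ≤ slopeFn α t := by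
  have h1 : 0 ≤ sinh ((1 - α) * t) := sinh_nonneg_iff.2 (mul_nonneg (by linarith) ht.le)
  have h2 : 0 < sinh t := sinh_pos_iff.2 ht
  unfold slopeFn
  positivity

/-- The factorization of `slopeFn` into three factors that are monotone in `t`. -/
lemma slopeFn_eq {α t : ℝ} (ht : 0 < t) :
    slopeFn α t = cosh t / (1 + cosh t) *
      ((sinh ((1 - α) * t) / sinh (1 / 2 * t)) * (cosh (1 / 2 * t) / cosh (α * t))) := by
  have hs : sinh t = 2 * sinh (1 / 2 * t) * cosh (1 / 2 * t) := by
    rw [← sinh_two_mul]; congr 1; ring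
  have hc : 1 + cosh t = 2 * cosh (1 / 2 * t) ^ 2 := by
    have h : cosh t = cosh (2 * (1 / 2 * t)) := by congr 1; ring
    rw [h, cosh_two_mul, cosh_sq (1 / 2 * t)]; ring
  have h2 : 0 < sinh (1 / 2 * t) := sinh_pos_iff.2 (by linarith)
  have h3 := cosh_pos (1 / 2 * t)
  have h4 := cosh_pos (α * t)
  rw [hc, slopeFn, hs]
  field_simp

lemma slopeFn_mono {α : ℝ} (hα0 : 0 < α) (hα : α ≤ 1 / 2) :
    MonotoneOn (slopeFn α) (Ioi 0) := by
  intro s hs t ht hst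
  have hs0 : 0 < s := hs
  have ht0 : 0 < t := ht
  rw [slopeFn_eq hs0, slopeFn_eq ht0]
  have h1 : cosh s / (1 + cosh s) ≤ cosh t / (1 + cosh t) := by
    have hc : cosh s ≤ cosh t := by
      rw [cosh_le_cosh, abs_of_pos hs0, abs_of_pos ht0]; exact hst
    have := cosh_pos s
    have := cosh_pos t
    rw [div_le_div_iff₀ (by linarith) (by linarith)]
    nlinarith
  have h2 := sinh_ratio_mono (a := 1 - α) (b := 1 / 2) (by norm_num) (by linarith) hs ht hst
  have h3 : cosh (1 / 2 * s) / cosh (α * s) ≤ cosh (1 / 2 * t) / cosh (α * t) := by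
    rw [div_le_div_iff₀ (cosh_pos _) (cosh_pos _)]
    exact cosh_cross_le hα0.le hα hs0.le hst
  have p1 : 0 ≤ sinh ((1 - α) * s) / sinh (1 / 2 * s) :=
    div_nonneg (sinh_nonneg_iff.2 (mul_nonneg (by linarith) hs0.le))
      (sinh_nonneg_iff.2 (by linarith))
  have p2 : 0 ≤ sinh ((1 - α) * t) / sinh (1 / 2 * t) := p1.trans h2
  have := cosh_pos s
  have := cosh_pos t
  have := cosh_pos (α * s)
  have := cosh_pos (1 / 2 * s)
  refine mul_le_mul h1 (mul_le_mul h2 h3 (by positivity) p2) ?_ (by positivity)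
  exact mul_nonneg p1 (by positivity)

/-- The larger of the two probabilities `p` with `√(p(1-p)) = x`. -/
noncomputable def bhattInv (x : ℝ) : ℝ := (1 + √(1 - 4 * x ^ 2)) / 2

/-- The Rényi entropy as a function of the Bhattacharyya parameter `x`. -/
noncomputable def renyiPhi (α x : ℝ) : ℝ :=
  (1 / (1 - α)) * log (bhattInv x ^ α + (1 - bhattInv x) ^ α)

lemma bhattInv_mem (x : ℝ) : 1 / 2 ≤ bhattInv x ∧ bhattInv x ≤ 1 := by
  have h1 : 0 ≤ √(1 - 4 * x ^ 2) := sqrt_nonneg _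
  have h2 : √(1 - 4 * x ^ 2) ≤ 1 := by
    rw [sqrt_le_one]; nlinarith [sq_nonneg x]
  unfold bhattInv
  constructor <;> linarith

lemma continuous_renyiPhi {α : ℝ} (hα0 : 0 < α) : Continuous (renyiPhi α) := by
  have hc : Continuous bhattInv := by unfold bhattInv; fun_prop
  unfold renyiPhi
  refine continuous_const.mul (Continuous.log ?_ ?_)
  · exact (hc.rpow_const fun _ => Or.inr hα0.le).add
      ((continuous_const.sub hc).rpow_const fun _ => Or.inr hα0.le)
  · intro x
    obtain ⟨h1, h2⟩ := bhattInv_mem x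
    have h3 : 0 < bhattInv x ^ α := rpow_pos_of_pos (by linarith) _
    have h4 : 0 ≤ (1 - bhattInv x) ^ α := rpow_nonneg (by linarith) _
    linarith

lemma renyiPhi_eq (α : ℝ) {x : ℝ} (hx : x ∈ Ioo (0 : ℝ) (1 / 2)) :
    renyiPhi α x = (1 / (1 - α)) * (log (2 * cosh (α * arcosh ((2 * x)⁻¹)))
      - α * log (2 * cosh (arcosh ((2 * x)⁻¹)))) := by
  obtain ⟨hx0, hx1⟩ := hx
  have hx2 : 1 ≤ (2 * x)⁻¹ := by
    rw [one_le_inv₀ (by linarith)]; linarith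
  set t := arcosh ((2 * x)⁻¹) with ht
  have ht0 : 0 ≤ t := arcosh_nonneg hx2
  have hc : cosh t = (2 * x)⁻¹ := cosh_arcosh hx2
  have hcp := cosh_pos t
  have hxt : x = 1 / (2 * cosh t) := by rw [hc]; field_simp
  have hsq : √(1 - 4 * x ^ 2) = sinh t / cosh t := by
    have : 1 - 4 * x ^ 2 = (sinh t / cosh t) ^ 2 := by
      rw [hxt, div_pow (sinh t), sinh_sq]; field_simp; ring
    rw [this, sqrt_sq (div_nonneg (sinh_nonneg_iff.2 ht0) hcp.le)]
  have hp : bhattInv x = exp t / (2 * cosh t) := by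
    rw [bhattInv, hsq, ← cosh_add_sinh]; field_simp
  have hq : 1 - bhattInv x = exp (-t) / (2 * cosh t) := by
    rw [bhattInv, hsq, ← cosh_sub_sinh]; field_simp; ring
  have hsum : bhattInv x ^ α + (1 - bhattInv x) ^ α
      = (2 * cosh (α * t)) / (2 * cosh t) ^ α := by
    rw [hq, hp, div_rpow (exp_pos _).le (by positivity), div_rpow (exp_pos _).le (by positivity),
      ← exp_mul, ← exp_mul, ← add_div, cosh_eq (α * t)]
    congr 1
    rw [mul_comm t α, show -t * α = -(α * t) by ring]
    ring
  have hcp' := cosh_pos (α * t)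
  rw [renyiPhi, hsum, log_div (by positivity) (by positivity), log_rpow (by positivity)]

lemma hasDerivAt_renyiPhi {α : ℝ} {x : ℝ} (hx : x ∈ Ioo (0 : ℝ) (1 / 2)) :
    HasDerivAt (renyiPhi α)
      (1 / (1 - α) * (2 * α * slopeFn α (arcosh ((2 * x)⁻¹)))) x := by
  have hev : renyiPhi α =ᶠ[nhds x] fun x =>
      (1 / (1 - α)) * (log (2 * cosh (α * arcosh ((2 * x)⁻¹)))
      - α * log (2 * cosh (arcosh ((2 * x)⁻¹)))) := by
    filter_upwards [isOpen_Ioo.mem_nhds hx] with y hy using renyiPhi_eq α hy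
  refine HasDerivAt.congr_of_eventuallyEq ?_ hev
  obtain ⟨hx0, hx1⟩ := hx
  have hx2 : 1 < (2 * x)⁻¹ := by
    rw [one_lt_inv₀ (by linarith)]; linarith
  have hlin : HasDerivAt (fun y : ℝ => 2 * y) 2 x := by
    simpa using (hasDerivAt_id x).const_mul (2 : ℝ)
  have hT := (hasDerivAt_arcosh (mem_Ioi.2 hx2)).comp x (hlin.inv (by positivity))
  rw [← sinh_arcosh hx2.le] at hT
  have hc : cosh (arcosh ((2 * x)⁻¹)) = (2 * x)⁻¹ := cosh_arcosh hx2.le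
  have ht0 : 0 < arcosh ((2 * x)⁻¹) := arcosh_pos hx2
  have hT' : HasDerivAt (fun y : ℝ => arcosh ((2 * y)⁻¹))
      (-2 * cosh (arcosh ((2 * x)⁻¹)) ^ 2 / sinh (arcosh ((2 * x)⁻¹))) x := by
    refine hT.congr_deriv ?_
    rw [hc]
    field_simp
  have hcp := cosh_pos (arcosh ((2 * x)⁻¹))
  have hcp' := cosh_pos (α * arcosh ((2 * x)⁻¹))
  have hsp := sinh_pos_iff.2 ht0
  have h1 := (((hT'.const_mul α).cosh.const_mul 2).log (by positivity)).sub
    (((hT'.cosh.const_mul 2).log (by positivity)).const_mul α)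
  refine (h1.const_mul (1 / (1 - α))).congr_deriv ?_
  generalize arcosh ((2 * x)⁻¹) = t at *
  congr 1
  rw [slopeFn, show (1 - α) * t = t - α * t by ring, sinh_sub]
  field_simp
  ring

lemma renyiPhi_sqrt (α : ℝ) (hα : α ≠ 1) {p : ℝ} (hp : p ∈ Ioo (0 : ℝ) 1) :
    binaryRenyiEntropy α p = renyiPhi α √(p * (1 - p)) := by
  obtain ⟨h0, h1⟩ := hp
  have hb : bhattInv √(p * (1 - p)) = (1 + |1 - 2 * p|) / 2 := by
    rw [bhattInv, sq_sqrt (by nlinarith), ← sqrt_sq_eq_abs]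
    congr 3
    ring
  rw [binaryRenyiEntropy, if_neg hα, renyiPhi, hb]
  rcases le_total 0 (1 - 2 * p) with h | h
  · rw [abs_of_nonneg h, add_comm]
    congr 4 <;> ring
  · rw [abs_of_nonpos h]
    congr 4 <;> ring

lemma renyi_half {p : ℝ} (hp : p ∈ Ioo (0 : ℝ) 1) :
    binaryRenyiEntropy (1 / 2) p = log (1 + 2 * √(p * (1 - p))) := by
  obtain ⟨h0, h1⟩ := hp
  have hsum : 1 + 2 * √(p * (1 - p)) = (√p + √(1 - p)) ^ 2 := by
    rw [sqrt_mul h0.le, add_sq, sq_sqrt h0.le, sq_sqrt (by linarith)]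
    ring
  rw [binaryRenyiEntropy, if_neg (by norm_num), hsum, log_pow, ← sqrt_eq_rpow, ← sqrt_eq_rpow]
  norm_num

theorem stmt_12 (α : ℝ) (hα0 : 0 < α) (hα : α ≤ 1 / 2) :
    (∃ φ : ℝ → ℝ,
      ConcaveOn ℝ (Set.Icc (0 : ℝ) (1 / 2)) φ ∧
      MonotoneOn φ (Set.Icc (0 : ℝ) (1 / 2)) ∧
      ∀ p ∈ Set.Ioo (0 : ℝ) 1,
        binaryRenyiEntropy α p = φ (Real.sqrt (p * (1 - p)))) ∧
    (∀ p ∈ Set.Ioo (0 : ℝ) 1,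
      binaryRenyiEntropy (1 / 2) p = Real.log (1 + 2 * Real.sqrt (p * (1 - p)))) := by
  have hone : 0 < 1 - α := by linarith
  have hinv : ∀ x ∈ Ioo (0 : ℝ) (1 / 2), 1 < (2 * x)⁻¹ := by
    rintro x ⟨hx0, hx1⟩
    rw [one_lt_inv₀ (by linarith)]; linarith
  have hdiff : DifferentiableOn ℝ (renyiPhi α) (interior (Icc 0 (1 / 2))) := by
    rw [interior_Icc]
    exact fun x hx => (hasDerivAt_renyiPhi hx).differentiableAt.differentiableWithinAt
  refine ⟨⟨renyiPhi α, ?_, ?_, fun p hp => renyiPhi_sqrt α (by linarith) hp⟩,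
    fun p hp => renyi_half hp⟩
  · refine AntitoneOn.concaveOn_of_deriv (convex_Icc _ _)
      (continuous_renyiPhi hα0).continuousOn hdiff ?_
    rw [interior_Icc]
    intro x hx y hy hxy
    rw [(hasDerivAt_renyiPhi hx).deriv, (hasDerivAt_renyiPhi hy).deriv]
    have hle : (2 * y)⁻¹ ≤ (2 * x)⁻¹ :=
      inv_anti₀ (by linarith [hx.1]) (by linarith)
    have hT : arcosh ((2 * y)⁻¹) ≤ arcosh ((2 * x)⁻¹) :=
      (arcosh_le_arcosh (by linarith [hinv y hy]) (by linarith [hinv x hx])).2 hle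
    have hs := slopeFn_mono hα0 hα (mem_Ioi.2 (arcosh_pos (hinv y hy)))
      (mem_Ioi.2 (arcosh_pos (hinv x hx))) hT
    gcongr
  · refine monotoneOn_of_deriv_nonneg (convex_Icc _ _)
      (continuous_renyiPhi hα0).continuousOn hdiff ?_
    rw [interior_Icc]
    intro x hx
    rw [(hasDerivAt_renyiPhi hx).deriv]
    have := slopeFn_nonneg hα (arcosh_pos (hinv x hx))
    positivity
end
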